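/- arXiv:1611.10099 — 2 statements merged into one kernel-verified Lean document; each statement's English description precedes it below -/
import Mathlib

section
/- Let ε₁, ε₂ ≥ 0 and let H : D → ℝ satisfy: (i) |H(x,y,z) − H(σ(x),σ(y),σ(z))| ≤ ε₁ for all (x,y,z) ∈ D and every permutation σ of the three coordinates; (ii) |H(x,y,z) − H(x+y,0,z) − H(x,y,0)| ≤ ε₂ for all (x,y,z) ∈ D°. Then the function F : ℝ₊₊ × ℝ₊₊ → ℝ defined by F(x,y) = H(x,y,0) satisfies |F(x+y,z) + F(x,y) − F(x,y+z) − F(y,z)| ≤ 2ε₂ + 4ε₁ for all x,y,z > 0, and |F(x,y) − F(y,x)| ≤ ε₁ for all x,y > 0. -/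
/-!
In the exact case, expanding `H x y z = H y z x` by the entropy equation on both sides gives
`H (x + y) 0 z + H x y 0 = H (y + z) 0 x + H y z 0`, and permuting the coordinates of
`H (x + y) 0 z` and `H (y + z) 0 x` turns this into the cocycle equation for `H · · 0`. The entropy
equation is used twice and symmetry three times, so the errors add up to `2 * ε₂ + 3 * ε₁`.
-/

section

variable {M E : Type*} [AddZeroClass M] [Preorder M] [SeminormedAddCommGroup E]
  {ε ε₁ ε₂ : ℝ} {H : M → M → M → E} {x y z : M}

/-- Symmetry up to an error `ε` under permutations of the coordinates, on the cone of nonnegative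
triples with positive sum. Values of `H` off this cone are unconstrained. -/
def IsApproxSymmetric (ε : ℝ) (H : M → M → M → E) : Prop :=
  ∀ x y z : M, 0 ≤ x → 0 ≤ y → 0 ≤ z → 0 < x + y + z → ∀ σ : Equiv.Perm (Fin 3),
    ‖H x y z - H (![x, y, z] (σ 0)) (![x, y, z] (σ 1)) (![x, y, z] (σ 2))‖ ≤ ε

/-- The entropy equation `H x y z = H (x + y) 0 z + H x y 0` up to an error `ε`, required only at
triples of positive elements. -/
def IsApproxEntropySolution (ε : ℝ) (H : M → M → M → E) : Prop :=
  ∀ x y z : M, 0 < x → 0 < y → 0 < z → ‖H x y z - H (x + y) 0 z - H x y 0‖ ≤ ε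

namespace IsApproxSymmetric

theorem norm_sub_rotate_le (hH : IsApproxSymmetric ε H) (hx : 0 ≤ x) (hy : 0 ≤ y) (hz : 0 ≤ z)
    (hxyz : 0 < x + y + z) : ‖H x y z - H y z x‖ ≤ ε :=
  hH x y z hx hy hz hxyz (finRotate 3)

theorem norm_sub_swap_left_le (hH : IsApproxSymmetric ε H) (hx : 0 ≤ x) (hy : 0 ≤ y) (hz : 0 ≤ z)
    (hxyz : 0 < x + y + z) : ‖H x y z - H y x z‖ ≤ ε :=
  hH x y z hx hy hz hxyz (Equiv.swap 0 1)

theorem norm_sub_swap_right_le (hH : IsApproxSymmetric ε H) (hx : 0 ≤ x) (hy : 0 ≤ y) (hz : 0 ≤ z)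
    (hxyz : 0 < x + y + z) : ‖H x y z - H x z y‖ ≤ ε :=
  hH x y z hx hy hz hxyz (Equiv.swap 1 2)

end IsApproxSymmetric

variable [AddLeftMono M]

theorem IsApproxEntropySolution.norm_cocycle_le (hent : IsApproxEntropySolution ε₂ H)
    (hsym : IsApproxSymmetric ε₁ H) (hx : 0 < x) (hy : 0 < y) (hz : 0 < z) :
    ‖H (x + y) z 0 + H x y 0 - H x (y + z) 0 - H y z 0‖ ≤ 2 * ε₂ + 3 * ε₁ := by
  have hxy : 0 < x + y := add_pos_of_pos_of_nonneg hx hy.le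
  have hyz : 0 < y + z := add_pos_of_pos_of_nonneg hy hz.le
  have entropy_xyz := hent x y z hx hy hz
  have entropy_yzx := hent y z x hy hz hx
  have rotate_xyz : ‖H x y z - H y z x‖ ≤ ε₁ :=
    hsym.norm_sub_rotate_le hx.le hy.le hz.le (add_pos_of_pos_of_nonneg hxy hz.le)
  have swap_xy : ‖H (x + y) z 0 - H (x + y) 0 z‖ ≤ ε₁ :=
    hsym.norm_sub_swap_right_le hxy.le hz.le le_rfl
      (add_pos_of_pos_of_nonneg (add_pos_of_pos_of_nonneg hxy hz.le) le_rfl)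
  have rotate_yz : ‖H x (y + z) 0 - H (y + z) 0 x‖ ≤ ε₁ :=
    hsym.norm_sub_rotate_le hx.le hyz.le le_rfl
      (add_pos_of_pos_of_nonneg (add_pos_of_pos_of_nonneg hx hyz.le) le_rfl)
  calc ‖H (x + y) z 0 + H x y 0 - H x (y + z) 0 - H y z 0‖
      = ‖(H y z x - H (y + z) 0 x - H y z 0) - (H x y z - H (x + y) 0 z - H x y 0)
          + (H x y z - H y z x) + (H (x + y) z 0 - H (x + y) 0 z)
          - (H x (y + z) 0 - H (y + z) 0 x)‖ := by congr 1; abel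
    _ ≤ ε₂ + ε₂ + ε₁ + ε₁ + ε₁ :=
        norm_sub_le_of_le (norm_add_le_of_le (norm_add_le_of_le
          (norm_sub_le_of_le entropy_yzx entropy_xyz) rotate_xyz) swap_xy) rotate_yz
    _ = 2 * ε₂ + 3 * ε₁ := by ring

theorem approx_entropy_gives_approx_cocycle_general
    (hsym : IsApproxSymmetric ε₁ H) (hent : IsApproxEntropySolution ε₂ H)
    {F : M → M → E} (hF : ∀ x y : M, 0 < x → 0 < y → F x y = H x y 0) :
    (∀ x y z : M, 0 < x → 0 < y → 0 < z →
      ‖F (x + y) z + F x y - F x (y + z) - F y z‖ ≤ 2 * ε₂ + 3 * ε₁) ∧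
    (∀ x y : M, 0 < x → 0 < y → ‖F x y - F y x‖ ≤ ε₁) := by
  refine ⟨fun x y z hx hy hz => ?_, fun x y hx hy => ?_⟩
  · rw [hF _ _ (add_pos_of_pos_of_nonneg hx hy.le) hz, hF _ _ hx hy,
      hF _ _ hx (add_pos_of_pos_of_nonneg hy hz.le), hF _ _ hy hz]
    exact hent.norm_cocycle_le hsym hx hy hz
  · rw [hF _ _ hx hy, hF _ _ hy hx]
    exact hsym.norm_sub_swap_left_le hx.le hy.le le_rfl
      (add_pos_of_pos_of_nonneg (add_pos_of_pos_of_nonneg hx hy.le) le_rfl)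

end

/-- If `H` is approximately symmetric on `D` and approximately satisfies the
entropy equation on `D°`, then `F(x,y) = H(x,y,0)` approximately satisfies the
cocycle equation with bound `2ε₂ + 4ε₁` and is approximately symmetric with
bound `ε₁`. -/
theorem approx_entropy_gives_approx_cocycle
    (ε₁ ε₂ : ℝ) (hε₁ : 0 ≤ ε₁) (hε₂ : 0 ≤ ε₂)
    (H : ℝ → ℝ → ℝ → ℝ)
    (hsym : ∀ x y z : ℝ, 0 ≤ x → 0 ≤ y → 0 ≤ z → 0 < x + y + z →
      ∀ σ : Equiv.Perm (Fin 3),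
        |H x y z - H (![x, y, z] (σ 0)) (![x, y, z] (σ 1)) (![x, y, z] (σ 2))| ≤ ε₁)
    (heq : ∀ x y z : ℝ, 0 < x → 0 < y → 0 < z →
      |H x y z - H (x + y) 0 z - H x y 0| ≤ ε₂)
    (F : ℝ → ℝ → ℝ) (hF : ∀ x y : ℝ, 0 < x → 0 < y → F x y = H x y 0) :
    (∀ x y z : ℝ, 0 < x → 0 < y → 0 < z →
      |F (x + y) z + F x y - F x (y + z) - F y z| ≤ 2 * ε₂ + 4 * ε₁) ∧
    (∀ x y : ℝ, 0 < x → 0 < y → |F x y - F y x| ≤ ε₁) := by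
  have ⟨hcocycle, hcomm⟩ :=
    approx_entropy_gives_approx_cocycle_general (ε₁ := ε₁) (ε₂ := ε₂) (H := H) hsym heq hF
  exact ⟨fun x y z hx hy hz => (hcocycle x y z hx hy hz).trans (by linarith), hcomm⟩
end

section
/- Let δ, ε₃ ≥ 0 and let F : ℝ₊₊ × ℝ₊₊ → ℝ satisfy |F(x+y,z) + F(x,y) − F(x,y+z) − F(y,z)| ≤ δ for all x,y,z > 0 and |F(tx,ty) − F(x,y)| ≤ ε₃ for all t,x,y > 0. Then |F(x,y) − F(1,1)| ≤ 4ε₃ + 6δ for all x,y > 0. -/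
/-!
For an exact cocycle `F` on a commutative semigroup, four instances of the cocycle equation
combine to
`F (2x) (2y) + F x x + F y y - F (x + y) (x + y) = 3 F x y - F y x`.
If moreover `F (2x) (2y) = F x y` and `F` is constant, equal to `c`, on the diagonal, this says
`2 F x y - F y x = c`. Together with the same equation for `(y, x)` it forces `F x y = c`.
Each of these steps is linear, hence stable under bounded errors, and no exact cocycle near `F`
has to be constructed.
-/

section CocycleDefect

variable {S E : Type*} [AddCommSemigroup S]

/-- The amount `F (x + y) z + F x y - F x (y + z) - F y z` by which `F` fails the cocycle equation
at `(x, y, z)`; approximate cocycles are the functions for which it is bounded. -/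
def cocycleDefect [AddCommGroup E] (F : S → S → E) (x y z : S) : E :=
  F (x + y) z + F x y - F x (y + z) - F y z

theorem apply_add_self_add_self_eq_add_cocycleDefect [AddCommGroup E] (F : S → S → E) (x y : S) :
    F (x + x) (y + y) + F x x + F y y - F (x + y) (x + y) =
      3 • F x y - F y x + (cocycleDefect F x x (y + y) - cocycleDefect F x y y -
        cocycleDefect F x y (x + y) + cocycleDefect F y x y) := by
  have add_add_self : y + (x + y) = x + (y + y) := add_left_comm y x y
  simp only [cocycleDefect, add_add_self, add_comm y x]
  abel

theorem norm_two_nsmul_sub_swap_sub_le [SeminormedAddCommGroup E] {F : S → S → E} {c : E}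
    {δ ε η : ℝ} (hcoc : ∀ x y z, ‖cocycleDefect F x y z‖ ≤ δ)
    (hdouble : ∀ x y, ‖F (x + x) (y + y) - F x y‖ ≤ ε) (hdiag : ∀ x, ‖F x x - c‖ ≤ η) (x y : S) :
    ‖2 • F x y - F y x - c‖ ≤ ε + 3 * η + 4 * δ := by
  have decomposition : 2 • F x y - F y x - c =
      (F (x + x) (y + y) - F x y) +
        ((F x x - c) + (F y y - c) - (F (x + y) (x + y) - c)) -
        (cocycleDefect F x x (y + y) - cocycleDefect F x y y -
          cocycleDefect F x y (x + y) + cocycleDefect F y x y) := by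
    rw [← sub_eq_iff_eq_add'.mpr (apply_add_self_add_self_eq_add_cocycleDefect F x y)]
    abel
  have diagonal_le : ‖(F x x - c) + (F y y - c) - (F (x + y) (x + y) - c)‖ ≤ η + η + η :=
    norm_sub_le_of_le (norm_add_le_of_le (hdiag x) (hdiag y)) (hdiag (x + y))
  have defects_le : ‖cocycleDefect F x x (y + y) - cocycleDefect F x y y -
      cocycleDefect F x y (x + y) + cocycleDefect F y x y‖ ≤ δ + δ + δ + δ :=
    norm_add_le_of_le (norm_sub_le_of_le (norm_sub_le_of_le (hcoc _ _ _) (hcoc _ _ _))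
      (hcoc _ _ _)) (hcoc _ _ _)
  calc ‖2 • F x y - F y x - c‖
      ≤ ε + (η + η + η) + (δ + δ + δ + δ) := by
        rw [decomposition]
        exact norm_sub_le_of_le (norm_add_le_of_le (hdouble x y) diagonal_le) defects_le
    _ = ε + 3 * η + 4 * δ := by ring

end CocycleDefect

theorem norm_sub_le_of_norm_two_nsmul_sub_sub_le {E : Type*} [SeminormedAddCommGroup E]
    [NormedSpace ℝ E] {a b c : E} {r : ℝ} (hab : ‖2 • a - b - c‖ ≤ r)
    (hba : ‖2 • b - a - c‖ ≤ r) : ‖a - c‖ ≤ r := by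
  have convex_combination :
      a - c = (2 / 3 : ℝ) • (2 • a - b - c) + (1 / 3 : ℝ) • (2 • b - a - c) := by module
  rw [← mem_closedBall_zero_iff] at hab hba ⊢
  rw [convex_combination]
  exact convex_closedBall 0 r hab hba (by norm_num) (by norm_num) (by norm_num)

theorem approx_cocycle_approx_zero_homogeneous_is_approx_constant_general {S E : Type*}
    [AddCommSemigroup S] [SeminormedAddCommGroup E] [NormedSpace ℝ E] {F : S → S → E} {c : E}
    {δ ε η : ℝ} (hcoc : ∀ x y z, ‖cocycleDefect F x y z‖ ≤ δ)
    (hdouble : ∀ x y, ‖F (x + x) (y + y) - F x y‖ ≤ ε) (hdiag : ∀ x, ‖F x x - c‖ ≤ η) (x y : S) :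
    ‖F x y - c‖ ≤ ε + 3 * η + 4 * δ :=
  norm_sub_le_of_norm_two_nsmul_sub_sub_le
    (norm_two_nsmul_sub_swap_sub_le hcoc hdouble hdiag x y)
    (norm_two_nsmul_sub_swap_sub_le hcoc hdouble hdiag y x)

/-- Key estimate in the α = 0 case of the stability of the entropy equation:
if `F` satisfies an approximate cocycle equation with bound `δ` and is
approximately positively homogeneous of degree 0 with bound `ε₃`, then
`|F(x,y) − F(1,1)| ≤ 4ε₃ + 6δ` for all `x, y > 0`. -/
theorem approx_cocycle_approx_zero_homogeneous_is_approx_constant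
    (δ ε₃ : ℝ) (hδ : 0 ≤ δ) (hε₃ : 0 ≤ ε₃)
    (F : ℝ → ℝ → ℝ)
    (hcoc : ∀ x y z : ℝ, 0 < x → 0 < y → 0 < z →
      |F (x + y) z + F x y - F x (y + z) - F y z| ≤ δ)
    (hhom : ∀ t x y : ℝ, 0 < t → 0 < x → 0 < y → |F (t * x) (t * y) - F x y| ≤ ε₃) :
    ∀ x y : ℝ, 0 < x → 0 < y → |F x y - F 1 1| ≤ 4 * ε₃ + 6 * δ := by
  intro x y hx hy
  have sharper_bound : |F x y - F 1 1| ≤ ε₃ + 3 * ε₃ + 4 * δ :=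
    approx_cocycle_approx_zero_homogeneous_is_approx_constant_general
      (S := {x : ℝ // 0 < x}) (F := fun x y ↦ F x y)
      (fun x y z ↦ hcoc x y z x.2 y.2 z.2)
      (fun x y ↦ by simpa [two_mul] using hhom 2 x y two_pos x.2 y.2)
      (fun x ↦ by simpa using hhom x 1 1 x.2 one_pos one_pos) ⟨x, hx⟩ ⟨y, hy⟩
  linarith
end
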